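/- arXiv:math/0402085 — 2 statements merged into one kernel-verified Lean document; each statement's English description precedes it below -/
import Mathlib

section
/- As $T \to \infty$, the number of subgroups $H \subseteq \mathbb{Z}^k$ with $[\mathbb{Z}^k:H] \le T$ is asymptotic to $\zeta(2)\zeta(3)\cdots\zeta(k)\, T^k/k$, for $k \ge 1$. -/
open Filter

/-! A subgroup `K` of `ℤ × A` is determined by the index `e` of its projection to `ℤ`, by
`H = K ∩ A`, and by the coset of `H` formed by the `a` with `(e, a) ∈ K`; its index is
`e * [A : H]`. Hence, for Dirichlet convolution, the number of subgroups of index `n` in `ℤ × A`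
is the convolution of `1` with `n` times the same number for `A`, and by induction the number of
subgroups of index `n` in `ℤ ^ k` is the convolution of the functions `n ^ i` with `i < k`, whose
Dirichlet series is `ζ(s) ζ(s - 1) ⋯ ζ(s - k + 1)`.

The summatory function of `n ^ (k - 1)` is asymptotic to `x ^ k / k`. By dominated convergence,
convolving with `n ^ i` for `i < k - 1` multiplies this asymptotic by
`∑ n ^ i / n ^ k = ζ(k - i)`.
-/

section Summatory

open Topology

/-- The summatory function `∑_{1 ≤ n ≤ x} f n` of an arithmetic function, as a function of a real
variable; it vanishes for `x < 1`. -/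
noncomputable def summatory {R : Type*} [AddCommMonoid R] (f : ArithmeticFunction R) (x : ℝ) : R :=
  ∑ n ∈ Finset.Ioc 0 ⌊x⌋₊, f n

theorem summatory_of_lt_one {R : Type*} [AddCommMonoid R] (f : ArithmeticFunction R) {x : ℝ}
    (hx : x < 1) : summatory f x = 0 := by
  simp [summatory, Nat.floor_eq_zero.2 hx]

theorem summatory_mul {R : Type*} [Semiring R] (f g : ArithmeticFunction R) (x : ℝ) :
    summatory (f * g) x = ∑ n ∈ Finset.Ioc 0 ⌊x⌋₊, f n * summatory g (x / n) := by
  simp only [summatory, ArithmeticFunction.sum_Ioc_mul_eq_sum_sum, Nat.floor_div_natCast]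

theorem natCast_summatory {R : Type*} [Semiring R] (f : ArithmeticFunction ℕ) (x : ℝ) :
    ((summatory f x : ℕ) : R) = summatory (f : ArithmeticFunction R) x := by
  simp [summatory]

section NormedRing

variable {R : Type*} [NormedRing R] [NormedAlgebra ℝ R]

theorem exists_norm_rpow_inv_smul_summatory_le {f : ArithmeticFunction R} {s : ℝ} (hs : 0 ≤ s)
    {L : R} (hf : Tendsto (fun x : ℝ ↦ (x ^ s)⁻¹ • summatory f x) atTop (𝓝 L)) :
    ∃ M, ∀ x : ℝ, ‖(x ^ s)⁻¹ • summatory f x‖ ≤ M := by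
  obtain ⟨X, hX⟩ := eventually_atTop.1 (hf.norm.eventually_le_const (lt_add_one ‖L‖))
  refine ⟨max (‖L‖ + 1) (∑ n ∈ Finset.Ioc 0 ⌊X⌋₊, ‖f n‖), fun x ↦ ?_⟩
  rcases lt_or_ge x 1 with hx | hx
  · simpa [summatory_of_lt_one f hx] using le_max_of_le_left (by positivity)
  rcases le_total X x with hXx | hxX
  · exact le_max_of_le_left (hX x hXx)
  refine le_max_of_le_right ?_
  calc ‖(x ^ s)⁻¹ • summatory f x‖
      = (x ^ s)⁻¹ * ‖summatory f x‖ := by rw [norm_smul, Real.norm_of_nonneg (by positivity)]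
    _ ≤ ‖summatory f x‖ :=
      mul_le_of_le_one_left (norm_nonneg _) (inv_le_one_of_one_le₀ (Real.one_le_rpow hx hs))
    _ ≤ ∑ n ∈ Finset.Ioc 0 ⌊x⌋₊, ‖f n‖ := norm_sum_le _ _
    _ ≤ ∑ n ∈ Finset.Ioc 0 ⌊X⌋₊, ‖f n‖ := by gcongr

theorem rpow_inv_smul_summatory_mul (f g : ArithmeticFunction R) (s : ℝ) {x : ℝ} (hx : 0 ≤ x) :
    (x ^ s)⁻¹ • summatory (g * f) x =
      ∑' n : ℕ, ((n : ℝ) ^ s)⁻¹ • g n * ((x / n) ^ s)⁻¹ • summatory f (x / n) := by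
  rw [tsum_eq_sum (s := Finset.Ioc 0 ⌊x⌋₊), summatory_mul, Finset.smul_sum]
  · refine Finset.sum_congr rfl fun n hn ↦ ?_
    have hn : (0 : ℝ) < n := mod_cast (Finset.mem_Ioc.1 hn).1
    rw [smul_mul_smul_comm, ← mul_inv, ← Real.mul_rpow hn.le (by positivity),
      mul_div_cancel₀ _ hn.ne']
  · intro n hn
    rcases Nat.eq_zero_or_pos n with rfl | hn_pos
    · simp
    have : x < n := (Nat.floor_lt hx).1 (by simpa [hn_pos] using hn)
    rw [summatory_of_lt_one f ((div_lt_one (by positivity)).2 this), smul_zero, mul_zero]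

theorem tendsto_summatory_mul [CompleteSpace R] {f g : ArithmeticFunction R} {s : ℝ} (hs : 0 ≤ s)
    {L : R} (hg : Summable fun n : ℕ ↦ ‖((n : ℝ) ^ s)⁻¹ • g n‖)
    (hf : Tendsto (fun x : ℝ ↦ (x ^ s)⁻¹ • summatory f x) atTop (𝓝 L)) :
    Tendsto (fun x : ℝ ↦ (x ^ s)⁻¹ • summatory (g * f) x) atTop
      (𝓝 ((∑' n : ℕ, ((n : ℝ) ^ s)⁻¹ • g n) * L)) := by
  obtain ⟨M, hM⟩ := exists_norm_rpow_inv_smul_summatory_le hs hf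
  have tendsto_term (n : ℕ) : Tendsto (fun x : ℝ ↦
      ((n : ℝ) ^ s)⁻¹ • g n * ((x / n) ^ s)⁻¹ • summatory f (x / n)) atTop
      (𝓝 (((n : ℝ) ^ s)⁻¹ • g n * L)) := by
    rcases Nat.eq_zero_or_pos n with rfl | hn
    · simp
    exact (hf.comp (tendsto_id.atTop_div_const (by positivity))).const_mul _
  have norm_term_le (x : ℝ) (n : ℕ) :
      ‖((n : ℝ) ^ s)⁻¹ • g n * ((x / n) ^ s)⁻¹ • summatory f (x / n)‖ ≤
        ‖((n : ℝ) ^ s)⁻¹ • g n‖ * M :=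
    (norm_mul_le _ _).trans (by gcongr; exact hM _)
  rw [← hg.of_norm.tsum_mul_right]
  refine (tendsto_tsum_of_dominated_convergence (hg.mul_right M) tendsto_term
    (.of_forall norm_term_le)).congr' ?_
  filter_upwards [eventually_ge_atTop 0] with x hx
  exact (rpow_inv_smul_summatory_mul f g s hx).symm

end NormedRing

theorem tendsto_summatory_prod_mul {ι R : Type*} [NormedCommRing R] [NormedAlgebra ℝ R]
    [CompleteSpace R] {f : ArithmeticFunction R} {g : ι → ArithmeticFunction R} {s : ℝ}
    (hs : 0 ≤ s) {L : R} (t : Finset ι)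
    (hg : ∀ i ∈ t, Summable fun n : ℕ ↦ ‖((n : ℝ) ^ s)⁻¹ • g i n‖)
    (hf : Tendsto (fun x : ℝ ↦ (x ^ s)⁻¹ • summatory f x) atTop (𝓝 L)) :
    Tendsto (fun x : ℝ ↦ (x ^ s)⁻¹ • summatory ((∏ i ∈ t, g i) * f) x) atTop
      (𝓝 ((∏ i ∈ t, ∑' n : ℕ, ((n : ℝ) ^ s)⁻¹ • g i n) * L)) := by
  induction t using Finset.cons_induction with
  | empty => simpa using hf
  | cons i t hi ih =>
    simp only [Finset.prod_cons, mul_assoc]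
    rw [Finset.forall_mem_cons] at hg
    exact tendsto_summatory_mul hs hg.1 (ih hg.2)

theorem rpow_div_le_sum_rpow {r : ℝ} (hr : 0 ≤ r) (N : ℕ) :
    (N : ℝ) ^ (r + 1) / (r + 1) ≤ ∑ n ∈ Finset.Ioc 0 N, (n : ℝ) ^ r := by
  have monotone : MonotoneOn (fun x : ℝ ↦ x ^ r) (Set.Icc (0 : ℕ) N) :=
    (Real.monotoneOn_rpow_Ici_of_exponent_nonneg hr).mono (by simp [Set.Icc_subset_Ici_self])
  have integral_le := monotone.integral_le_sum_Ico (Nat.zero_le N)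
  rw [integral_rpow (.inl (by linarith)), Nat.cast_zero, Real.zero_rpow (by linarith), sub_zero,
    Finset.sum_Ico_add' (fun n : ℕ ↦ (n : ℝ) ^ r)] at integral_le
  exact integral_le

theorem sum_rpow_le_rpow_div {r : ℝ} (hr : 0 ≤ r) (N : ℕ) :
    ∑ n ∈ Finset.Ioc 0 N, (n : ℝ) ^ r ≤ ((N : ℝ) + 1) ^ (r + 1) / (r + 1) := by
  have monotone : MonotoneOn (fun x : ℝ ↦ x ^ r) (Set.Icc (1 : ℕ) (N + 1 : ℕ)) :=
    (Real.monotoneOn_rpow_Ici_of_exponent_nonneg hr).mono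
      (Set.Icc_subset_Ici_self.trans (Set.Ici_subset_Ici.2 (by simp)))
  have sum_le := monotone.sum_le_integral_Ico (by simp)
  rw [integral_rpow (.inl (by linarith)), Nat.cast_one, Real.one_rpow, Nat.cast_add_one] at sum_le
  exact sum_le.trans (by gcongr; linarith)

theorem tendsto_sum_rpow {r : ℝ} (hr : 0 ≤ r) :
    Tendsto (fun x : ℝ ↦ (x ^ (r + 1))⁻¹ * ∑ n ∈ Finset.Ioc 0 ⌊x⌋₊, (n : ℝ) ^ r) atTop
      (𝓝 (r + 1)⁻¹) := by
  have floor : Tendsto (fun x : ℝ ↦ (⌊x⌋₊ : ℝ) / x) atTop (𝓝 1) := tendsto_nat_floor_div_atTop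
  have floor_add_one : Tendsto (fun x : ℝ ↦ ((⌊x⌋₊ : ℝ) + 1) / x) atTop (𝓝 1) := by
    simpa [add_div] using floor.add (tendsto_inv_atTop_zero (𝕜 := ℝ))
  have rpow_div {y : ℝ → ℝ} (hy : Tendsto (fun x ↦ y x / x) atTop (𝓝 1)) :
      Tendsto (fun x ↦ (y x / x) ^ (r + 1) / (r + 1)) atTop (𝓝 (r + 1)⁻¹) := by
    simpa using (hy.rpow_const (.inl one_ne_zero)).div_const (r + 1)
  refine tendsto_of_tendsto_of_tendsto_of_le_of_le' (rpow_div floor) (rpow_div floor_add_one) ?_ ?_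
    <;> filter_upwards [eventually_gt_atTop 0] with x hx
    <;> rw [Real.div_rpow (by positivity) hx.le, div_right_comm, div_eq_inv_mul _ (x ^ _)]
    <;> gcongr
  · exact rpow_div_le_sum_rpow hr _
  · exact sum_rpow_le_rpow_div hr _

end Summatory

section SubgroupCount

open ArithmeticFunction

theorem index_comap_inr_mul_index_map_fst {G G' : Type*} [AddGroup G] [AddGroup G']
    (K : AddSubgroup (G × G')) [K.Normal] :
    (K.comap (AddMonoidHom.inr G G')).index * (K.map (AddMonoidHom.fst G G')).index = K.index := by
  have range_inr : (AddMonoidHom.inr G G').range = (AddMonoidHom.fst G G').ker := by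
    ext ⟨x, y⟩
    simp [AddMonoidHom.mem_ker, -AddMonoidHom.ker_fst, eq_comm]
  have range_fst : (AddMonoidHom.fst G G').range = ⊤ :=
    AddMonoidHom.range_eq_top.2 Prod.fst_surjective
  rw [AddSubgroup.index_comap, AddSubgroup.index_map, range_inr, range_fst, AddSubgroup.index_top,
    mul_one, ← AddSubgroup.relIndex_sup_left, AddSubgroup.relIndex_mul_index le_sup_left]

theorem zmultiples_index_eq (H : AddSubgroup ℤ) : AddSubgroup.zmultiples (H.index : ℤ) = H := by
  obtain ⟨g, rfl⟩ := Int.subgroup_cyclic H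
  rw [← AddSubgroup.zmultiples_eq_closure, Int.index_zmultiples, Int.zmultiples_natAbs]

theorem finite_addSubgroup_index_eq {A : Type*} [AddCommGroup A] [AddGroup.FG A] {n : ℕ}
    (hn : n ≠ 0) : Finite {H : AddSubgroup A // H.index = n} := by
  let N := (nsmulAddMonoidHom (α := A) n).range
  have range_le (H : {H : AddSubgroup A // H.index = n}) : N ≤ H := by
    rcases H with ⟨H, rfl⟩
    rintro _ ⟨a, rfl⟩
    exact H.nsmul_index_mem a
  have : N.FiniteIndex := AddSubgroup.finiteIndex_range_nsmulAddMonoidHom_of_fg A hn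
  refine Finite.of_injective (fun H ↦ H.1.map (QuotientAddGroup.mk' N)) fun H H' h ↦ ?_
  have := congrArg (AddSubgroup.comap (QuotientAddGroup.mk' N)) h
  simpa [AddSubgroup.comap_map_eq, range_le, Subtype.ext_iff] using this

variable (A : Type*) [AddCommGroup A]

/-- The arithmetic function counting the subgroups of index `n` in `A`. An arithmetic function
vanishes at `0`, so the subgroups of infinite index, for which `AddSubgroup.index` is `0`, are not
counted. -/
noncomputable def subgroupCount : ArithmeticFunction ℕ where
  toFun n := if n = 0 then 0 else Nat.card {H : AddSubgroup A // H.index = n}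
  map_zero' := if_pos rfl

theorem subgroupCount_apply {n : ℕ} (hn : n ≠ 0) :
    subgroupCount A n = Nat.card {H : AddSubgroup A // H.index = n} :=
  if_neg hn

theorem subgroupCount_of_subsingleton [Subsingleton A] : subgroupCount A = 1 := by
  ext n
  rcases eq_or_ne n 0 with rfl | hn
  · simp
  have index_eq_one (H : AddSubgroup A) : H.index = 1 := by
    rw [Subsingleton.elim H ⊤, AddSubgroup.index_top]
  rw [subgroupCount_apply A hn, one_apply]
  split_ifs with h <;> simp [index_eq_one, h, Ne.symm]

variable {A}

theorem subgroupCount_congr {B : Type*} [AddCommGroup B] (φ : A ≃+ B) :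
    subgroupCount A = subgroupCount B := by
  ext n
  rcases eq_or_ne n 0 with rfl | hn
  · simp
  rw [subgroupCount_apply A hn, subgroupCount_apply B hn]
  exact Nat.card_congr <| φ.mapAddSubgroup.toEquiv.subtypeEquiv fun H ↦ by
    rw [← AddSubgroup.index_map_equiv H φ]; rfl

/-- The subgroup of `ℤ × A` that meets `A` in `H` and projects onto `e ℤ`, and whose slice over `e`
is the given coset of `H`: it consists of the `(t e, a)` such that `a` lies in `t` times the coset.
A coset of a varying subgroup is encoded as an element of `Σ H : AddSubgroup A, A ⧸ H`. These
properties hold for `e ≠ 0`. -/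
def cosetExtension (e : ℕ) (c : Σ H : AddSubgroup A, A ⧸ H) : AddSubgroup (ℤ × A) :=
  (AddSubgroup.zmultiples ((e : ℤ), c.2)).comap
    ((AddMonoidHom.id ℤ).prodMap (QuotientAddGroup.mk' c.1))

section CosetExtension

variable {e : ℕ}

theorem mul_mem_cosetExtension (he : e ≠ 0) {c : Σ H : AddSubgroup A, A ⧸ H} {t : ℤ} {a : A} :
    (t * (e : ℤ), a) ∈ cosetExtension e c ↔ t • c.2 = (a : A ⧸ c.1) := by
  simp [cosetExtension, AddSubgroup.mem_zmultiples_iff, he]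

theorem comap_inr_cosetExtension (he : e ≠ 0) (c : Σ H : AddSubgroup A, A ⧸ H) :
    (cosetExtension e c).comap (AddMonoidHom.inr ℤ A) = c.1 := by
  ext a
  simpa [eq_comm (a := (0 : A ⧸ c.1))] using mul_mem_cosetExtension he (c := c) (t := 0) (a := a)

theorem map_fst_cosetExtension (c : Σ H : AddSubgroup A, A ⧸ H) :
    (cosetExtension e c).map (AddMonoidHom.fst ℤ A) = AddSubgroup.zmultiples (e : ℤ) := by
  ext z
  simp only [AddSubgroup.mem_map, AddSubgroup.mem_zmultiples_iff, cosetExtension]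
  constructor
  · rintro ⟨x, ⟨t, ht⟩, rfl⟩
    exact ⟨t, congrArg Prod.fst ht⟩
  · rintro ⟨t, rfl⟩
    obtain ⟨a, ha⟩ := QuotientAddGroup.mk_surjective (t • c.2)
    exact ⟨(t • (e : ℤ), a), ⟨t, Prod.ext rfl ha.symm⟩, rfl⟩

theorem cosetExtension_injective (he : e ≠ 0) :
    Function.Injective (cosetExtension (A := A) e) := by
  rintro ⟨H, q⟩ ⟨H', q'⟩ h
  obtain rfl : H = H' := by
    simpa only [comap_inr_cosetExtension he] using
      congrArg (AddSubgroup.comap (AddMonoidHom.inr ℤ A)) h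
  obtain ⟨a, rfl⟩ := QuotientAddGroup.mk_surjective q
  have mem : (1 * (e : ℤ), a) ∈ cosetExtension e ⟨H, (a : A ⧸ H)⟩ :=
    (mul_mem_cosetExtension he).2 (one_zsmul _)
  rw [h, mul_mem_cosetExtension he, one_zsmul] at mem
  exact congrArg (Sigma.mk H) mem.symm

theorem exists_cosetExtension_eq (he : e ≠ 0) {K : AddSubgroup (ℤ × A)}
    (hK : K.map (AddMonoidHom.fst ℤ A) = AddSubgroup.zmultiples (e : ℤ)) :
    ∃ c, cosetExtension e c = K := by
  obtain ⟨⟨_, a⟩, ha, rfl⟩ : (e : ℤ) ∈ K.map (AddMonoidHom.fst ℤ A) :=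
    hK ▸ AddSubgroup.mem_zmultiples _
  let c : Σ H : AddSubgroup A, A ⧸ H := ⟨K.comap (AddMonoidHom.inr ℤ A), a⟩
  have mem_iff (t : ℤ) (b : A) : (t * (e : ℤ), b) ∈ cosetExtension e c ↔ (t * (e : ℤ), b) ∈ K := by
    rw [mul_mem_cosetExtension he, ← K.add_mem_cancel_left (K.neg_mem (K.zsmul_mem ha t)),
      ← QuotientAddGroup.mk_zsmul, QuotientAddGroup.eq]
    simp
  have fst_mem {L : AddSubgroup (ℤ × A)} {x : ℤ × A}
      (hL : L.map (AddMonoidHom.fst ℤ A) = AddSubgroup.zmultiples (e : ℤ)) (hx : x ∈ L) :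
      ∃ t : ℤ, t * (e : ℤ) = x.1 :=
    AddSubgroup.mem_zmultiples_iff.1 (hL ▸ AddSubgroup.mem_map_of_mem _ hx)
  refine ⟨c, AddSubgroup.ext fun ⟨z, b⟩ ↦ ⟨fun h ↦ ?_, fun h ↦ ?_⟩⟩
  · obtain ⟨t, rfl⟩ := fst_mem (map_fst_cosetExtension c) h
    exact (mem_iff t b).1 h
  · obtain ⟨t, rfl⟩ := fst_mem hK h
    exact (mem_iff t b).2 h

theorem cosetExtension_bijective (he : e ≠ 0) (d : ℕ) :
    Function.Bijective fun c : {c : Σ H : AddSubgroup A, A ⧸ H // c.1.index = d} ↦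
      (⟨cosetExtension e c.1, Prod.ext (by simp [map_fst_cosetExtension, Int.index_zmultiples])
        (by simp [comap_inr_cosetExtension he, c.2])⟩ :
        {K : AddSubgroup (ℤ × A) // ((K.map (AddMonoidHom.fst ℤ A)).index,
          (K.comap (AddMonoidHom.inr ℤ A)).index) = (e, d)}) := by
  refine ⟨fun c c' h ↦ Subtype.ext (cosetExtension_injective he (congrArg Subtype.val h)), ?_⟩
  rintro ⟨K, hK⟩
  obtain ⟨rfl, rfl⟩ := Prod.mk.inj hK
  obtain ⟨c, hc⟩ := exists_cosetExtension_eq he (zmultiples_index_eq _).symm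
  exact ⟨⟨c, by rw [← hc, comap_inr_cosetExtension he]⟩, Subtype.ext hc⟩

end CosetExtension

theorem finite_coset_index_eq [AddGroup.FG A] {d : ℕ} (hd : d ≠ 0) :
    Finite {c : Σ H : AddSubgroup A, A ⧸ H // c.1.index = d} := by
  have := finite_addSubgroup_index_eq (A := A) hd
  have (H : {H : AddSubgroup A // H.index = d}) : Finite (A ⧸ H.1) :=
    AddSubgroup.index_ne_zero_iff_finite.1 (by rwa [H.2])
  exact Finite.of_equiv _ (Equiv.subtypeSigmaEquiv _ fun H : AddSubgroup A ↦ H.index = d).symm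

theorem card_coset_index_eq [AddGroup.FG A] {d : ℕ} (hd : d ≠ 0) :
    Nat.card {c : Σ H : AddSubgroup A, A ⧸ H // c.1.index = d} = d * subgroupCount A d := by
  have := finite_addSubgroup_index_eq (A := A) hd
  have := Fintype.ofFinite {H : AddSubgroup A // H.index = d}
  have card_quotient (H : {H : AddSubgroup A // H.index = d}) : Nat.card (A ⧸ H.1) = d := H.2
  have (H : {H : AddSubgroup A // H.index = d}) : Finite (A ⧸ H.1) :=
    Nat.finite_of_card_ne_zero (by rwa [card_quotient H])
  rw [Nat.card_congr (Equiv.subtypeSigmaEquiv _ fun H : AddSubgroup A ↦ H.index = d),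
    Nat.card_sigma, subgroupCount_apply A hd]
  simp [card_quotient, mul_comm]

theorem subgroupCount_int_prod [AddGroup.FG A] :
    subgroupCount (ℤ × A) = zeta * ArithmeticFunction.id.pmul (subgroupCount A) := by
  ext n
  rcases eq_or_ne n 0 with rfl | hn
  · simp
  have index_eq_iff (K : AddSubgroup (ℤ × A)) : K.index = n ↔
      ((K.map (AddMonoidHom.fst ℤ A)).index, (K.comap (AddMonoidHom.inr ℤ A)).index) ∈
        n.divisorsAntidiagonal := by
    simp [← index_comap_inr_mul_index_map_fst K, mul_comm, hn]
  have ne_zero (p : {p // p ∈ n.divisorsAntidiagonal}) :=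
    Nat.ne_zero_of_mem_divisorsAntidiagonal p.2
  let fiberEquiv (p : {p // p ∈ n.divisorsAntidiagonal}) :=
    Equiv.ofBijective _ (cosetExtension_bijective (A := A) (ne_zero p).1 p.1.2)
  have (p : {p // p ∈ n.divisorsAntidiagonal}) :=
    (fiberEquiv p).finite_iff.1 (finite_coset_index_eq (ne_zero p).2)
  rw [subgroupCount_apply _ hn,
    ← Nat.card_congr (Equiv.sigmaSubtypeFiberEquivSubtype _ index_eq_iff), Nat.card_sigma,
    mul_apply, ← Finset.sum_coe_sort n.divisorsAntidiagonal]
  refine Finset.sum_congr rfl fun p _ ↦ ?_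
  rw [← Nat.card_congr (fiberEquiv p), card_coset_index_eq (ne_zero p).2]
  simp [(ne_zero p).1]

theorem pmul_mul_of_map_mul {R : Type*} [CommSemiring R] {h : ArithmeticFunction R}
    (map_mul : ∀ m n, h (m * n) = h m * h n) (f g : ArithmeticFunction R) :
    h.pmul (f * g) = h.pmul f * h.pmul g := by
  ext n
  simp only [pmul_apply, mul_apply, Finset.mul_sum]
  refine Finset.sum_congr rfl fun p hp ↦ ?_
  rw [← (Nat.mem_divisorsAntidiagonal.1 hp).1, map_mul, mul_mul_mul_comm]

theorem id_pmul_prod_pow (k : ℕ) :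
    ArithmeticFunction.id.pmul (∏ i ∈ Finset.range k, pow i) =
      ∏ i ∈ Finset.range k, pow (i + 1) := by
  induction k with
  | zero => ext n; simp +contextual [one_apply]
  | succ k ih =>
    rw [Finset.prod_range_succ, Finset.prod_range_succ, pmul_mul_of_map_mul (by simp), ih,
      pow, pow, ppow_succ']

theorem subgroupCount_fin_int (k : ℕ) :
    subgroupCount (Fin k → ℤ) = ∏ i ∈ Finset.range k, pow i := by
  induction k with
  | zero => simp [subgroupCount_of_subsingleton]
  | succ k ih =>
    rw [← subgroupCount_congr (Fin.consLinearEquiv ℤ fun _ : Fin (k + 1) ↦ ℤ).toAddEquiv,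
      subgroupCount_int_prod, ih, id_pmul_prod_pow, Finset.prod_range_succ', pow_zero_eq_zeta,
      mul_comm]

theorem ncard_index_le (A : Type*) [AddCommGroup A] [AddGroup.FG A] (T : ℝ) :
    {H : AddSubgroup A | 0 < H.index ∧ (H.index : ℝ) ≤ T}.ncard =
      summatory (subgroupCount A) T := by
  have mem_iff (H : AddSubgroup A) :
      H ∈ {H : AddSubgroup A | 0 < H.index ∧ (H.index : ℝ) ≤ T} ↔
        H.index ∈ Finset.Ioc 0 ⌊T⌋₊ := by
    simp +contextual [Nat.le_floor_iff', Nat.pos_iff_ne_zero]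
  have ne_zero (n : {n // n ∈ Finset.Ioc 0 ⌊T⌋₊}) : (n : ℕ) ≠ 0 := (Finset.mem_Ioc.1 n.2).1.ne'
  have (n : {n // n ∈ Finset.Ioc 0 ⌊T⌋₊}) := finite_addSubgroup_index_eq (A := A) (ne_zero n)
  rw [← Nat.card_coe_set_eq,
    ← Nat.card_congr (Equiv.sigmaSubtypeFiberEquivSubtype _ mem_iff), Nat.card_sigma,
    summatory, ← Finset.sum_coe_sort (Finset.Ioc 0 ⌊T⌋₊)]
  exact Finset.sum_congr rfl fun n _ ↦ (subgroupCount_apply A (ne_zero n)).symm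

end SubgroupCount

section Zeta

open ArithmeticFunction

theorem natCoe_prod {ι R : Type*} [CommSemiring R] (t : Finset ι) (f : ι → ArithmeticFunction ℕ) :
    ((∏ i ∈ t, f i : ArithmeticFunction ℕ) : ArithmeticFunction R) =
      ∏ i ∈ t, (f i : ArithmeticFunction R) := by
  induction t using Finset.cons_induction with
  | empty => simp
  | cons i t hi ih => rw [Finset.prod_cons, Finset.prod_cons, natCoe_mul, ih]

theorem riemannZeta_natCast_re {m : ℕ} (hm : 1 < m) :
    (riemannZeta m).re = ∑' n : ℕ, 1 / (n : ℝ) ^ m := by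
  rw [zeta_nat_eq_tsum_of_gt_one hm]
  rw [← Complex.ofReal_re (∑' n : ℕ, 1 / (n : ℝ) ^ m)]
  push_cast
  rfl

theorem riemannZeta_natCast_re_pos {m : ℕ} (hm : 1 < m) : 0 < (riemannZeta m).re := by
  rw [riemannZeta_natCast_re hm]
  exact (Real.summable_one_div_nat_pow.2 hm).tsum_pos (fun _ ↦ by positivity) 1 (by simp)

theorem rpow_inv_smul_pow {i k : ℕ} (hi : i < k) (n : ℕ) :
    ((n : ℝ) ^ (k : ℝ))⁻¹ • (pow i : ArithmeticFunction ℝ) n = 1 / (n : ℝ) ^ (k - i) := by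
  rcases eq_or_ne n 0 with rfl | hn
  · simp [Nat.sub_ne_zero_of_lt hi]
  · simp [pow_sub₀ (n : ℝ) (mod_cast hn) hi.le, hn, mul_comm]

theorem tendsto_summatory_pow (j : ℕ) :
    Tendsto (fun x : ℝ ↦ (x ^ ((j + 1 : ℕ) : ℝ))⁻¹ • summatory (pow j : ArithmeticFunction ℝ) x)
      atTop (nhds ((j + 1 : ℕ) : ℝ)⁻¹) := by
  rw [Nat.cast_add_one]
  refine (tendsto_sum_rpow (Nat.cast_nonneg j)).congr fun x ↦ congrArg _ ?_
  refine Finset.sum_congr rfl fun n hn ↦ ?_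
  simp [(Finset.mem_Ioc.1 hn).1.ne']

theorem prod_range_riemannZeta_re (j : ℕ) :
    ∏ i ∈ Finset.range j, (riemannZeta (j + 1 - i : ℕ)).re =
      ∏ m ∈ Finset.Icc 2 (j + 1), (riemannZeta m).re := by
  refine Finset.prod_nbij' (j + 1 - ·) (j + 1 - ·) ?_ ?_ ?_ ?_ fun _ _ ↦ rfl <;>
    simp only [Finset.mem_range, Finset.mem_Icc] <;> omega

theorem tendsto_summatory_subgroupCount (j : ℕ) :
    Tendsto
      (fun x : ℝ ↦ (x ^ (j + 1))⁻¹ * ((summatory (subgroupCount (Fin (j + 1) → ℤ)) x : ℕ) : ℝ))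
      atTop (nhds ((∏ m ∈ Finset.Icc 2 (j + 1), (riemannZeta m).re) * ((j + 1 : ℕ) : ℝ)⁻¹)) := by
  have smul_pow {i : ℕ} (hi : i ∈ Finset.range j) :=
    rpow_inv_smul_pow (k := j + 1) (Nat.lt_succ_of_lt (Finset.mem_range.1 hi))
  have one_lt {i : ℕ} (hi : i ∈ Finset.range j) : 1 < j + 1 - i := by
    rw [Finset.mem_range] at hi
    omega
  have limit := tendsto_summatory_prod_mul (g := fun i ↦ (pow i : ArithmeticFunction ℝ))
    (Nat.cast_nonneg (j + 1)) (Finset.range j)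
    (fun i hi ↦ by
      simpa only [smul_pow hi] using (Real.summable_one_div_nat_pow.2 (one_lt hi)).norm)
    (tendsto_summatory_pow j)
  rw [← natCoe_prod, ← natCoe_mul, ← Finset.prod_range_succ, ← subgroupCount_fin_int,
    Finset.prod_congr rfl fun i hi ↦ (tsum_congr (smul_pow hi)).trans
      (riemannZeta_natCast_re (one_lt hi)).symm, prod_range_riemannZeta_re] at limit
  simpa only [Real.rpow_natCast, natCast_summatory, smul_eq_mul] using limit

end Zeta

/-- As `T → ∞`, the number of finite-index subgroups `H ⊆ ℤ^k` with `[ℤ^k : H] ≤ T`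
is asymptotic to `ζ(2) ζ(3) ⋯ ζ(k) · T^k / k`, for `k ≥ 1`. -/
theorem stmt3 (k : ℕ) (hk : 1 ≤ k) :
    Tendsto
      (fun T : ℝ =>
        ({H : AddSubgroup (Fin k → ℤ) | 0 < H.index ∧ (H.index : ℝ) ≤ T}.ncard : ℝ) /
          ((∏ i ∈ Finset.Icc 2 k, (riemannZeta (i : ℂ)).re) * T ^ k / k))
      atTop (nhds 1) := by
  obtain ⟨j, rfl⟩ := Nat.exists_eq_add_of_le' hk
  have zeta_prod_pos : 0 < ∏ i ∈ Finset.Icc 2 (j + 1), (riemannZeta (i : ℂ)).re :=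
    Finset.prod_pos fun i hi ↦ riemannZeta_natCast_re_pos (Finset.mem_Icc.1 hi).1
  have limit_ne_zero :
      (∏ i ∈ Finset.Icc 2 (j + 1), (riemannZeta (i : ℂ)).re) * ((j + 1 : ℕ) : ℝ)⁻¹ ≠ 0 := by
    positivity
  have ratio := (tendsto_summatory_subgroupCount j).div_const
    ((∏ i ∈ Finset.Icc 2 (j + 1), (riemannZeta (i : ℂ)).re) * ((j + 1 : ℕ) : ℝ)⁻¹)
  rw [div_self limit_ne_zero] at ratio
  refine ratio.congr fun T ↦ ?_
  rw [ncard_index_le]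
  ring
end

section
/- For each prime $p$, $k \ge 1$, and real $s > k$: $\sum_{J} [\mathbb{Z}_p^k : J]^{-s} = \prod_{i=0}^{k-1}(1 - p^{i-s})^{-1}$, where the sum is over all finite-index $\mathbb{Z}_p$-submodules $J \subseteq \mathbb{Z}_p^k$. -/
/-
A submodule `J ⊆ L × M` is determined by `A = J ∩ M`, its projection `I ⊆ L` and the linear map
`I → M / A` sending `x` to the class of the `y` with `(x, y) ∈ J`; its index is `[L : I] [M : A]`.
Over a principal ideal domain `R`, every nonzero ideal `I` is free of rank one, so for `L = R` there
are `[M : A]` such maps. Summing over all `(I, A)` gives `ζ_{R × M}(s) = ζ_R(s) ζ_M(s - 1)`, hence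
`ζ_{R^k}(s) = ∏_{i < k} ζ_R(s - i)`. For a discrete valuation ring with residue field of cardinality
`q`, the nonzero ideals are the powers of the maximal ideal, so `ζ_R` is the geometric series
`∑ q^{-ns}`.
-/

open IsLocalRing
open scoped ENNReal

theorem ennreal_mul_rpow_neg {c : ℝ≥0∞} {s : ℝ} (hc : c ≠ 0) (hs : 1 < s) :
    c * c ^ (-s) = c ^ (-(s - 1)) := by
  obtain rfl | hc' := eq_or_ne c ∞
  · rw [ENNReal.top_rpow_of_neg (by linarith), ENNReal.top_rpow_of_neg (by linarith), mul_zero]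
  · rw [neg_sub, sub_eq_add_neg, ENNReal.rpow_add _ _ hc hc', ENNReal.rpow_one]

theorem enatCard_eq_mul_enatCard_ker {G H : Type*} [AddGroup G] [AddGroup H] {f : G →+ H}
    (hf : Function.Surjective f) : ENat.card G = ENat.card H * ENat.card f.ker := by
  rw [ENat.card_congr f.ker.addGroupEquivQuotientProdAddSubgroup, ENat.card_prod,
    ENat.card_congr (QuotientAddGroup.quotientKerEquivOfSurjective f hf).toEquiv]

section Goursat

variable {R L M : Type*} [Ring R] [AddCommGroup L] [Module R L] [AddCommGroup M] [Module R M]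

theorem enatCard_quotient_prod (J : Submodule R (L × M)) :
    ENat.card ((L × M) ⧸ J) =
      ENat.card (L ⧸ J.map (.fst R L M)) * ENat.card (M ⧸ J.comap (.inr R L M)) := by
  let π : (L × M) ⧸ J →ₗ[R] L ⧸ J.map (.fst R L M) :=
    J.mapQ _ (.fst R L M) (Submodule.le_comap_map _ _)
  let ι : M →ₗ[R] (L × M) ⧸ J := J.mkQ ∘ₗ .inr R L M
  have hπ : Function.Surjective π := .of_comp (g := J.mkQ) <|
    (J.map (.fst R L M)).mkQ_surjective.comp Prod.fst_surjective
  have hker_π : π.ker = ι.range := by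
    rw [Submodule.ker_mapQ, Submodule.comap_map_eq, Submodule.map_sup, Submodule.mkQ_map_self,
      bot_sup_eq, LinearMap.ker_fst, LinearMap.range_comp]
  have hker_ι : ι.ker = J.comap (.inr R L M) := by
    rw [LinearMap.ker_comp, Submodule.ker_mkQ]
  calc ENat.card ((L × M) ⧸ J)
      = ENat.card (L ⧸ J.map (.fst R L M)) * ENat.card π.ker :=
        enatCard_eq_mul_enatCard_ker (f := π.toAddMonoidHom) hπ
    _ = _ := by rw [hker_π, ← ENat.card_congr ι.quotKerEquivRange.toEquiv, hker_ι]

/-- The submodule `{(x, y) | x ∈ dom f, f x = y + A}` of `L × M` attached to a submodule `A` of `M`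
and a linear map `f` from a submodule of `L` to `M ⧸ A`, as in Goursat's lemma. The map is
encoded as a `LinearPMap`, so that its domain is part of the data. -/
def goursatSubmodule (A : Submodule R M) (f : L →ₗ.[R] M ⧸ A) : Submodule R (L × M) :=
  f.graph.comap (LinearMap.id.prodMap A.mkQ)

theorem comap_inr_goursatSubmodule (A : Submodule R M) (f : L →ₗ.[R] M ⧸ A) :
    (goursatSubmodule A f).comap (.inr R L M) = A := by
  ext y
  simp [goursatSubmodule, eq_comm (a := (0 : M ⧸ A))]

theorem map_prodMap_mkQ_goursatSubmodule (A : Submodule R M) (f : L →ₗ.[R] M ⧸ A) :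
    (goursatSubmodule A f).map (LinearMap.id.prodMap A.mkQ) = f.graph :=
  Submodule.map_comap_eq_of_surjective
    (Function.surjective_id.prodMap A.mkQ_surjective) f.graph

theorem map_fst_goursatSubmodule (A : Submodule R M) (f : L →ₗ.[R] M ⧸ A) :
    (goursatSubmodule A f).map (.fst R L M) = f.domain := by
  rw [← f.graph_map_fst_eq_domain, ← map_prodMap_mkQ_goursatSubmodule, ← Submodule.map_comp]
  rfl

theorem goursatSubmodule_injective :
    Function.Injective fun t : Σ A : Submodule R M, L →ₗ.[R] M ⧸ A ↦
      goursatSubmodule t.1 t.2 := by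
  rintro ⟨A, f⟩ ⟨B, g⟩ h
  obtain rfl : A = B := by
    simpa only [comap_inr_goursatSubmodule] using congrArg (Submodule.comap (.inr R L M)) h
  have hgraph : f.graph = g.graph := by
    simpa only [map_prodMap_mkQ_goursatSubmodule] using
      congrArg (Submodule.map (LinearMap.id.prodMap A.mkQ)) h
  rw [LinearPMap.eq_of_eq_graph hgraph]

theorem goursatSubmodule_surjective :
    Function.Surjective fun t : Σ A : Submodule R M, L →ₗ.[R] M ⧸ A ↦
      goursatSubmodule t.1 t.2 := by
  intro J
  let A := J.comap (.inr R L M)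
  let π : L × M →ₗ[R] L × (M ⧸ A) := LinearMap.id.prodMap A.mkQ
  have hgraph : ∀ z ∈ J.map π, z.1 = 0 → z.2 = 0 := by
    rintro _ ⟨⟨x, y⟩, hxy, rfl⟩ (rfl : x = 0)
    exact (Submodule.Quotient.mk_eq_zero A).2 hxy
  have hker : π.ker ≤ J := by
    rintro ⟨x, y⟩ hxy
    obtain ⟨rfl, hy⟩ : x = 0 ∧ y ∈ A := by simpa [π] using hxy
    exact hy
  refine ⟨⟨A, (J.map π).toLinearPMap⟩, ?_⟩
  change (J.map π).toLinearPMap.graph.comap π = J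
  rw [Submodule.toLinearPMap_graph_eq _ hgraph, Submodule.comap_map_eq, sup_eq_left.2 hker]

theorem tsum_linearPMap_domain (w : Submodule R L → ℝ≥0∞) :
    ∑' f : L →ₗ.[R] M, w f.domain = ∑' I : Submodule R L, ENat.card (I →ₗ[R] M) * w I := by
  let e : (Σ I : Submodule R L, I →ₗ[R] M) ≃ (L →ₗ.[R] M) :=
    ⟨fun t ↦ ⟨t.1, t.2⟩, fun f ↦ ⟨f.domain, f.toFun⟩, fun _ ↦ rfl, fun _ ↦ rfl⟩
  rw [← e.tsum_eq, ENNReal.tsum_sigma']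
  exact tsum_congr fun I ↦ ENNReal.tsum_const (w I)

end Goursat

/-- The zeta function `ζ_M(s) = ∑_J [M : J]^{-s}` of an `R`-module `M`, summed over the submodules
of `M`. The index is taken in `ℕ∞`, so that for `s > 0` a submodule of infinite index contributes
`∞^{-s} = 0`; the value is in `ℝ≥0∞`, so that divergence of the series means `ζ_M(s) = ∞`. -/
noncomputable def submoduleZeta (R M : Type*) [Ring R] [AddCommGroup M] [Module R M] (s : ℝ) :
    ℝ≥0∞ :=
  ∑' J : Submodule R M, (ENat.card (M ⧸ J) : ℝ≥0∞) ^ (-s)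

section Ring

variable {R L M N : Type*} [Ring R] [AddCommGroup L] [Module R L] [AddCommGroup M] [Module R M]
  [AddCommGroup N] [Module R N] {s : ℝ}

theorem submoduleZeta_congr (e : M ≃ₗ[R] N) (s : ℝ) :
    submoduleZeta R M s = submoduleZeta R N s := by
  rw [submoduleZeta, submoduleZeta, ← (Submodule.orderIsoMapComap e).toEquiv.tsum_eq]
  refine tsum_congr fun J ↦ ?_
  rw [ENat.card_congr (Submodule.Quotient.equiv J (J.map e.toLinearMap) e rfl).toEquiv]
  rfl

theorem hasSum_index_rpow_neg (h : submoduleZeta R M s ≠ ∞) :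
    HasSum (fun J : Submodule R M ↦ (J.toAddSubgroup.index : ℝ) ^ (-s))
      (submoduleZeta R M s).toReal := by
  have hterm (J : Submodule R M) :
      ((ENat.card (M ⧸ J) : ℝ≥0∞) ^ (-s)).toReal = (J.toAddSubgroup.index : ℝ) ^ (-s) := by
    rw [← ENNReal.toReal_rpow, ENNReal.toReal_enatCard]
    rfl
  rw [submoduleZeta, ENNReal.tsum_toReal_eq (ENNReal.ne_top_of_tsum_ne_top h)]
  simpa only [hterm] using ENNReal.hasSum_toReal h

theorem rpow_neg_enatCard_quotient_bot [Infinite M] (hs : 0 < s) :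
    (ENat.card (M ⧸ (⊥ : Submodule R M)) : ℝ≥0∞) ^ (-s) = 0 := by
  rw [ENat.card_congr (Submodule.quotEquivOfEqBot _ rfl).toEquiv, ENat.card_eq_top_of_infinite,
    ENat.toENNReal_top, ENNReal.top_rpow_of_neg (neg_lt_zero.2 hs)]

theorem submoduleZeta_prod_eq_tsum (s : ℝ) :
    submoduleZeta R (L × M) s = ∑' (I : Submodule R L) (A : Submodule R M),
      ENat.card (I →ₗ[R] M ⧸ A) *
        ((ENat.card (L ⧸ I) : ℝ≥0∞) ^ (-s) * (ENat.card (M ⧸ A) : ℝ≥0∞) ^ (-s)) := by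
  let e := Equiv.ofBijective _
    ⟨goursatSubmodule_injective (R := R) (L := L) (M := M), goursatSubmodule_surjective⟩
  rw [submoduleZeta, ← e.tsum_eq, ENNReal.tsum_sigma', ENNReal.tsum_comm]
  refine tsum_congr fun A ↦ ?_
  rw [← tsum_linearPMap_domain]
  refine tsum_congr fun f ↦ ?_
  rw [show e ⟨A, f⟩ = goursatSubmodule A f from rfl, enatCard_quotient_prod,
    map_fst_goursatSubmodule, comap_inr_goursatSubmodule, ENat.toENNReal_mul,
    ENNReal.mul_rpow_of_ne_zero (by simp) (by simp)]

end Ring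

section PrincipalIdealRing

variable {R M : Type*} [CommRing R] [IsDomain R] [IsPrincipalIdealRing R]
  [AddCommGroup M] [Module R M] {s : ℝ}

theorem enatCard_linearMap_ideal {I : Ideal R} (hI : I ≠ ⊥) :
    ENat.card (I →ₗ[R] M) = ENat.card M :=
  ENat.card_congr <| ((I.isoBaseOfIsPrincipal hI).symm.arrowCongr (.refl R M) ≪≫ₗ
    LinearMap.ringLmapEquivSelf R R M).toEquiv

theorem submoduleZeta_prod [Infinite R] (hs : 1 < s) :
    submoduleZeta R (R × M) s = submoduleZeta R R s * submoduleZeta R M (s - 1) := by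
  rw [submoduleZeta_prod_eq_tsum, submoduleZeta, ← ENNReal.tsum_mul_right]
  refine tsum_congr fun I ↦ ?_
  rw [submoduleZeta, ← ENNReal.tsum_mul_left]
  refine tsum_congr fun A ↦ ?_
  obtain rfl | hI := eq_or_ne I ⊥
  · rw [rpow_neg_enatCard_quotient_bot (zero_lt_one.trans hs), zero_mul, zero_mul, mul_zero]
  · rw [enatCard_linearMap_ideal hI, mul_left_comm, ennreal_mul_rpow_neg (by simp) hs]

theorem submoduleZeta_pi [Infinite R] {k : ℕ} (hk : 1 ≤ k) (hs : (k : ℝ) - 1 < s) :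
    submoduleZeta R (Fin k → R) s = ∏ i ∈ Finset.range k, submoduleZeta R R (s - i) := by
  induction k, hk using Nat.le_induction generalizing s with
  | base => simpa using submoduleZeta_congr (LinearEquiv.funUnique (Fin 1) R R) s
  | succ k hk ih =>
    have one_le_k : (1 : ℝ) ≤ k := by exact_mod_cast hk
    push_cast at hs
    rw [← submoduleZeta_congr (Fin.consLinearEquiv R fun _ ↦ R), submoduleZeta_prod (by linarith),
      ih (by linarith), Finset.prod_range_succ', mul_comm]
    simp [sub_sub, add_comm]

end PrincipalIdealRing

theorem enatCard_quotient_pow {R : Type*} [CommRing R] [IsDedekindDomain R] {P : Ideal R}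
    [P.IsPrime] (hP : P ≠ ⊥) (n : ℕ) : ENat.card (R ⧸ P ^ n) = ENat.card (R ⧸ P) ^ n := by
  obtain rfl | hn := eq_or_ne n 0
  · have : Subsingleton (R ⧸ P ^ 0) :=
      Ideal.Quotient.subsingleton_iff.2 ((pow_zero P).trans Ideal.one_eq_top)
    rw [pow_zero (ENat.card _), ENat.card_eq_one_iff_unique]
    exact ⟨Unique.mk' _⟩
  cases finite_or_infinite (R ⧸ P)
  · have := Ideal.finite_quotient_pow (IsNoetherian.noetherian P) n
    rw [ENat.card_eq_coe_natCard, ENat.card_eq_coe_natCard, ← Nat.cast_pow]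
    exact congrArg _ (cardQuot_pow_of_prime hP)
  · have : Infinite (R ⧸ P ^ n) :=
      .of_surjective _ (Ideal.Quotient.factor_surjective (Ideal.pow_le_self hn))
    rw [ENat.card_eq_top_of_infinite, ENat.card_eq_top_of_infinite, ENat.top_pow hn]

section DiscreteValuationRing

variable (R : Type*) [CommRing R] [IsDomain R] [IsDiscreteValuationRing R] {k : ℕ} {s : ℝ}

theorem infinite_of_isDiscreteValuationRing : Infinite R :=
  not_finite_iff_infinite.1 fun _ ↦
    IsDiscreteValuationRing.not_isField R (Finite.isField_of_domain R)

theorem maximalIdeal_pow_injective : Function.Injective fun n : ℕ ↦ maximalIdeal R ^ n :=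
  (IsDiscreteValuationRing.idealOrderIsoENat R).symm.injective.comp
    (OrderDual.toDual.injective.comp Nat.cast_injective)

theorem tsum_ideal_eq_tsum_maximalIdeal_pow {w : Ideal R → ℝ≥0∞} (hw : w ⊥ = 0) :
    ∑' I, w I = ∑' n : ℕ, w (maximalIdeal R ^ n) := by
  refine ((maximalIdeal_pow_injective R).tsum_eq fun I hI ↦ ?_).symm
  have hI_ne : I ≠ ⊥ := by
    rintro rfl
    exact hI hw
  obtain ⟨ϖ, hϖ⟩ := IsDiscreteValuationRing.exists_irreducible R
  obtain ⟨n, rfl⟩ := IsDiscreteValuationRing.ideal_eq_span_pow_irreducible hI_ne hϖ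
  exact ⟨n, by simp only [hϖ.maximalIdeal_eq, Ideal.span_singleton_pow]⟩

theorem submoduleZeta_self (hs : 0 < s) :
    submoduleZeta R R s = (1 - (ENat.card (ResidueField R) : ℝ≥0∞) ^ (-s))⁻¹ := by
  have := infinite_of_isDiscreteValuationRing R
  rw [submoduleZeta, ← ENNReal.tsum_geometric,
    tsum_ideal_eq_tsum_maximalIdeal_pow R (rpow_neg_enatCard_quotient_bot hs)]
  refine tsum_congr fun n ↦ ?_
  rw [enatCard_quotient_pow (IsDiscreteValuationRing.not_a_field R), ENat.toENNReal_pow,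
    ← ENNReal.rpow_natCast, ← ENNReal.rpow_natCast, ← ENNReal.rpow_mul,
    ← ENNReal.rpow_mul, mul_comm]
  rfl

theorem submoduleZeta_pi_eq_prod_inv (hk : 1 ≤ k) (hs : (k : ℝ) - 1 < s) :
    submoduleZeta R (Fin k → R) s =
      ∏ i ∈ Finset.range k, (1 - (ENat.card (ResidueField R) : ℝ≥0∞) ^ ((i : ℝ) - s))⁻¹ := by
  have := infinite_of_isDiscreteValuationRing R
  rw [submoduleZeta_pi hk hs]
  refine Finset.prod_congr rfl fun i hi ↦ ?_
  have hik : (i : ℝ) + 1 ≤ k := by exact_mod_cast Finset.mem_range.1 hi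
  rw [submoduleZeta_self R (by linarith), neg_sub]

theorem stmt15_general [Finite (ResidueField R)] (hk : 1 ≤ k) (hs : (k : ℝ) - 1 < s) :
    HasSum (fun J : Submodule R (Fin k → R) ↦ (J.toAddSubgroup.index : ℝ) ^ (-s))
      (∏ i ∈ Finset.range k, (1 - (Nat.card (ResidueField R) : ℝ) ^ ((i : ℝ) - s))⁻¹) := by
  have hzeta := submoduleZeta_pi_eq_prod_inv R hk hs
  have hlt : ∀ i ∈ Finset.range k,
      (ENat.card (ResidueField R) : ℝ≥0∞) ^ ((i : ℝ) - s) < 1 := fun i hi ↦ by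
    have hik : (i : ℝ) + 1 ≤ k := by exact_mod_cast Finset.mem_range.1 hi
    exact ENNReal.rpow_lt_one_of_one_lt_of_neg (mod_cast ENat.one_lt_card) (by linarith)
  have hfin : submoduleZeta R (Fin k → R) s ≠ ∞ := hzeta ▸
    ENNReal.prod_ne_top fun i hi ↦ ENNReal.inv_ne_top.2 (tsub_pos_of_lt (hlt i hi)).ne'
  convert hasSum_index_rpow_neg hfin
  rw [hzeta, ENNReal.toReal_prod]
  refine Finset.prod_congr rfl fun i hi ↦ ?_
  rw [ENNReal.toReal_inv, ENNReal.toReal_sub_of_le (hlt i hi).le ENNReal.one_ne_top,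
    ENNReal.toReal_one, ← ENNReal.toReal_rpow, ENNReal.toReal_enatCard]

end DiscreteValuationRing

/-- For each prime `p`, `k ≥ 1`, and real `s > k`:
`∑_J [ℤ_p^k : J]^{-s} = ∏_{i=0}^{k-1} (1 - p^{i-s})⁻¹`, the sum being over all
finite-index `ℤ_p`-submodules `J ⊆ ℤ_p^k` (submodules of infinite index have
`index = 0` and contribute `0^{-s} = 0`). -/
theorem stmt15 (p k : ℕ) [Fact p.Prime] (hk : 1 ≤ k) (s : ℝ) (hs : (k : ℝ) < s) :
    ∑' J : Submodule ℤ_[p] (Fin k → ℤ_[p]),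
        ((J.toAddSubgroup.index : ℝ) ^ (-s)) =
      ∏ i ∈ Finset.range k, (1 - (p : ℝ) ^ ((i : ℝ) - s))⁻¹ := by
  have : Finite (ResidueField ℤ_[p]) := .of_equiv _ PadicInt.residueField.symm.toEquiv
  have hcard : Nat.card (ResidueField ℤ_[p]) = p := by
    rw [Nat.card_congr PadicInt.residueField.toEquiv, Nat.card_zmod]
  simpa only [hcard] using (stmt15_general ℤ_[p] hk (by linarith : (k : ℝ) - 1 < s)).tsum_eq
end
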